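/- Let L ≥ 2 be an integer and set M = 3(L+1). If ζ(L) is the hierarchical weighted word and ψ ∈ Ψ_M is M-spaced, then the pair (ζ(L), ψ) is compatible (in the weighted-word sense). -/

import Mathlib

open Filter Set MeasureTheory
open scoped ENNReal NNReal

namespace Paper

/-! ### Binary sequences and compatibility -/

/-- Delete the `i`-th entry of a sequence, shifting everything to the right of it
one step to the left. -/
def deleteAt {α : Type*} (ξ : ℕ → α) (i : ℕ) : ℕ → α :=
  fun j => if j < i then ξ j else ξ (j + 1)

/-- The annihilation operator `Δ_i^0` on binary sequences: delete the `i`-th digit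
if it is a zero (`false`), otherwise do nothing. -/
def delta0 (ξ : ℕ → Bool) (i : ℕ) : ℕ → Bool :=
  if ξ i = false then deleteAt ξ i else ξ

/-- The annihilation operator `Δ_i^1` on binary sequences: delete the `i`-th digit
if it is a one (`true`), otherwise do nothing. -/
def delta1 (ξ : ℕ → Bool) (i : ℕ) : ℕ → Bool :=
  if ξ i = true then deleteAt ξ i else ξ

/-- `Reach1 η η'` : `η'` is obtained from `η` by finitely many applications of
operators `Δ_·^1`. -/
def Reach1 : (ℕ → Bool) → (ℕ → Bool) → Prop :=
  Relation.ReflTransGen fun a b => ∃ i, b = delta1 a i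

/-- `Reach0 ξ ξ'` : `ξ'` is obtained from `ξ` by finitely many applications of
operators `Δ_·^0`. -/
def Reach0 : (ℕ → Bool) → (ℕ → Bool) → Prop :=
  Relation.ReflTransGen fun a b => ∃ i, b = delta0 a i

/-- Compatibility of an ordered pair of binary sequences: one can delete ones from `η`
and zeroes from `ξ` so that the resulting sequences converge (in the product topology)
to a common limit. -/
def Compatible (η ξ : ℕ → Bool) : Prop :=
  ∃ (ηs ξs : ℕ → ℕ → Bool) (l : ℕ → Bool),
    (∀ k, Reach1 η (ηs k)) ∧ (∀ k, Reach0 ξ (ξs k)) ∧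
      Tendsto ηs atTop (nhds l) ∧ Tendsto ξs atTop (nhds l)

/-- `μ` is the product Bernoulli measure on `{0,1}^ℕ` with parameter `p`. -/
def IsBernoulliProduct (μ : Measure (ℕ → Bool)) (p : ℝ) : Prop :=
  IsProbabilityMeasure μ ∧
    ∀ (s : Finset ℕ) (b : ℕ → Bool),
      μ {ξ | ∀ i ∈ s, ξ i = b i} = ∏ i ∈ s, ENNReal.ofReal (if b i then p else 1 - p)

/-- The set `Ξ_∞` of binary sequences with infinitely many ones and infinitely many
zeroes. -/
def Xinf (ξ : ℕ → Bool) : Prop :=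
  (∀ n, ∃ m, n ≤ m ∧ ξ m = true) ∧ ∀ n, ∃ m, n ≤ m ∧ ξ m = false

/-- Length of the run of ones of `ξ` starting at position `n` (junk value `0` if the
run is infinite). -/
noncomputable def runLen (ξ : ℕ → Bool) (n : ℕ) : ℕ :=
  letI := Classical.dec (∃ k, ξ (n + k) = false)
  if h : ∃ k, ξ (n + k) = false then Nat.find h else 0

/-- The position in `ξ` at which the `j`-th letter of the weighted word `f ξ` starts. -/
noncomputable def fpos (ξ : ℕ → Bool) : ℕ → ℕ
  | 0 => 0
  | j + 1 => fpos ξ j + max (runLen ξ (fpos ξ j)) 1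

/-- The run-length map `f : Ξ_∞ → Ψ`, replacing each maximal run of ones by a single
letter whose weight is the length of the run (zeroes being kept as letters of
weight `0`). -/
noncomputable def fmap (ξ : ℕ → Bool) : ℕ → ℕ :=
  fun j => runLen ξ (fpos ξ j)

/-! ### Weighted words -/

/-- The set `Ψ` of weighted words: a weight `≥ 1` is always followed by a weight `0`. -/
def Psi (ψ : ℕ → ℕ) : Prop := ∀ i, 1 ≤ ψ i → ψ (i + 1) = 0

/-- The annihilation operator `Δ_i^0` on weighted words. -/
def pdelta0 (ψ : ℕ → ℕ) (i : ℕ) : ℕ → ℕ :=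
  if ψ i ≠ 0 then ψ
  else if i = 0 ∨ ψ (i - 1) = 0 ∨ ψ (i + 1) = 0 then deleteAt ψ i
  else fun j => if j + 1 < i then ψ j else if j + 1 = i then ψ (i - 1) + ψ (i + 1) else ψ (j + 2)

/-- The annihilation operator `Δ_i^1` on weighted words. -/
def pdelta1 (ψ : ℕ → ℕ) (i : ℕ) : ℕ → ℕ :=
  if ψ i = 0 then ψ
  else if ψ i = 1 then deleteAt ψ i
  else Function.update ψ i (ψ i - 1)

/-- Finitely many applications of operators `Δ_·^1` on weighted words. -/
def PReach1 : (ℕ → ℕ) → (ℕ → ℕ) → Prop :=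
  Relation.ReflTransGen fun a b => ∃ i, b = pdelta1 a i

/-- Finitely many applications of operators `Δ_·^0` on weighted words. -/
def PReach0 : (ℕ → ℕ) → (ℕ → ℕ) → Prop :=
  Relation.ReflTransGen fun a b => ∃ i, b = pdelta0 a i

/-- Compatibility of an ordered pair of weighted words. -/
def CompatibleP (ζ ψ : ℕ → ℕ) : Prop :=
  ∃ (ζs ψs : ℕ → ℕ → ℕ) (l : ℕ → ℕ),
    (∀ k, PReach1 ζ (ζs k)) ∧ (∀ k, PReach0 ψ (ψs k)) ∧
      (∀ k, Psi (ζs k)) ∧ (∀ k, Psi (ψs k)) ∧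
      Tendsto ζs atTop (nhds l) ∧ Tendsto ψs atTop (nhds l)

/-! ### The oriented percolation process -/

/-- Oriented edges of the graph `G`: from `u` to `u + (0,1)` and from `u` to `u + (1,1)`. -/
def IsStep (u v : ℕ × ℕ) : Prop :=
  (v.1 = u.1 ∧ v.2 = u.2 + 1) ∨ (v.1 = u.1 + 1 ∧ v.2 = u.2 + 1)

/-- Open vertices of the configuration `ω_{ζ,ψ}`.  (Sequences are `0`-indexed in this
formalization, so the entry of `ζ` at the paper's position `v₁ ≥ 1` is `ζ (v₁ - 1)`.) -/
def OpenV (ζ ψ : ℕ → ℕ) (v : ℕ × ℕ) : Prop :=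
  v = (0, 0) ∨ (1 ≤ v.1 ∧ 1 ≤ v.2 ∧ ψ (v.2 - 1) ≤ ζ (v.1 - 1))

/-- Heavy vertices: `v₂ = 0`, or the row weight `ψ_{v₂}` is positive. -/
def Heavy (ψ : ℕ → ℕ) (v : ℕ × ℕ) : Prop := v.2 = 0 ∨ 1 ≤ ψ (v.2 - 1)

/-- `π 0, π 1, …, π n` is an open oriented path in `ω_{ζ,ψ}`. -/
def IsOpenPath (ζ ψ : ℕ → ℕ) (π : ℕ → ℕ × ℕ) (n : ℕ) : Prop :=
  (∀ i < n, IsStep (π i) (π (i + 1))) ∧ ∀ i ≤ n, OpenV ζ ψ (π i)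

/-- The path `π 0, …, π n` is permitted: any two distinct heavy vertices on it have
different first coordinates. -/
def IsPermitted (ψ : ℕ → ℕ) (π : ℕ → ℕ × ℕ) (n : ℕ) : Prop :=
  ∀ i ≤ n, ∀ j ≤ n, π i ≠ π j → Heavy ψ (π i) → Heavy ψ (π j) → (π i).1 ≠ (π j).1

/-- There is an infinite open permitted oriented path starting from the origin in the
percolation configuration `ω_{ζ,ψ}`. -/
def InfOpenPermitted (ζ ψ : ℕ → ℕ) : Prop :=
  ∃ π : ℕ → ℕ × ℕ, π 0 = (0, 0) ∧ (∀ n, IsStep (π n) (π (n + 1))) ∧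
    (∀ n, OpenV ζ ψ (π n)) ∧
    ∀ i j, π i ≠ π j → Heavy ψ (π i) → Heavy ψ (π j) → (π i).1 ≠ (π j).1

/-- `V_{⟨ζ,ψ⟩}(c)`: vertices in row `c` reachable from the origin by an open permitted
oriented path. -/
def Vset (ζ ψ : ℕ → ℕ) (c : ℕ) : Set (ℕ × ℕ) :=
  {v | v.2 = c ∧ ∃ (π : ℕ → ℕ × ℕ) (n : ℕ), π 0 = (0, 0) ∧ π n = v ∧
    IsOpenPath ζ ψ π n ∧ IsPermitted ψ π n}

/-- The open oriented cluster of the origin in `ω_{ζ,ψ}`. -/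
def ClusterO (ζ ψ : ℕ → ℕ) : Set (ℕ × ℕ) :=
  {v | ∃ (π : ℕ → ℕ × ℕ) (n : ℕ), π 0 = (0, 0) ∧ π n = v ∧ IsOpenPath ζ ψ π n}

/-- The horizontal slab `S_{[a,b]}`. -/
def Slab (a b : ℕ) : Set (ℕ × ℕ) := {v | a ≤ v.2 ∧ v.2 ≤ b}

/-- The horizontal discrete segment in row `c` with endpoints `a` and `b`. -/
def HSeg (c a b : ℕ) : Set (ℕ × ℕ) := {v | v.2 = c ∧ a ≤ v.1 ∧ v.1 ≤ b}

/-- The shift `θ_m`. -/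
def shiftSeq (m : ℕ) (ψ : ℕ → ℕ) : ℕ → ℕ := fun j => ψ (j + m)

/-- The hierarchical weighted word `ζ(L)`: the letter at the paper's position
`j ≥ 1` (Lean index `j - 1`) has weight `k` iff `L^k ∣ j` and `L^{k+1} ∤ j`. -/
noncomputable def zetaL (L : ℕ) : ℕ → ℕ := fun j => sSup {k | L ^ k ∣ j + 1}

/-- Lean indices at which `ψ` has an entry `≥ k`. -/
def idxSet (ψ : ℕ → ℕ) (k : ℕ) : Set ℕ := {n | k ≤ ψ n}

/-- `i_k(ψ)`: the first (1-based, as in the paper) position at which `ψ` has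
an entry `≥ k` (meaningful when `idxSet ψ k` is nonempty). -/
noncomputable def idx (ψ : ℕ → ℕ) (k : ℕ) : ℕ := sInf (idxSet ψ k) + 1

/-- Condition a) of being `M`-spaced. -/
def CondA (M : ℕ) (ψ : ℕ → ℕ) : Prop := ∀ i j : ℕ, i < j → M ^ min (ψ i) (ψ j) ≤ j - i

/-- `ψ ∈ Ψ_M^k` : `ψ` is `M`-spaced up to level `k`. -/
def SpacedUpTo (M k : ℕ) (ψ : ℕ → ℕ) : Prop :=
  Psi ψ ∧ CondA M ψ ∧ ∀ j, 1 ≤ j → j ≤ k → (idxSet ψ j).Nonempty → M ^ j ≤ idx ψ j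

/-- `ψ ∈ Ψ_M` : `ψ` is `M`-spaced. -/
def Spaced (M : ℕ) (ψ : ℕ → ℕ) : Prop :=
  Psi ψ ∧ CondA M ψ ∧ ∀ j, 1 ≤ j → (idxSet ψ j).Nonempty → M ^ j ≤ idx ψ j

/-! ### Discrete Hausdorff dimension (Barlow–Taylor) -/

/-- `ν_α(A, F)` with the normalizing diameter `dF` of `F` given explicitly; the
infimum is over countable covers of `A ∩ F` by integer intervals `[x, y)`. -/
noncomputable def nuBT (α : ℝ) (A F : Set ℤ) (dF : ℝ) : ℝ≥0∞ :=
  (⨅ (B : ℕ → ℤ × ℤ) (_ : A ∩ F ⊆ ⋃ i, Set.Ico (B i).1 (B i).2),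
      ∑' i, ENNReal.ofReal ((((B i).2 - (B i).1 : ℤ)) : ℝ) ^ α) /
    ENNReal.ofReal dF ^ α

/-- The annulus `I_n^{(r)}` (for `n ≥ 1`). -/
noncomputable def ringBT (r n : ℕ) : Set ℤ :=
  if n = 1 then Set.Ico (-(r : ℤ)) (r : ℤ)
  else Set.Ico (-((r : ℤ) ^ n)) ((r : ℤ) ^ n) \ Set.Ico (-((r : ℤ) ^ (n - 1))) ((r : ℤ) ^ (n - 1))

/-- `m_α^{(r)}(A) = ∑_{n ≥ 1} ν_α(A, I_n^{(r)})`. -/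
noncomputable def mBT (r : ℕ) (α : ℝ) (A : Set ℤ) : ℝ≥0∞ :=
  ∑' n : ℕ, nuBT α A (ringBT r (n + 1)) (2 * (r : ℝ) ^ (n + 1))

/-- The discrete (Barlow–Taylor) Hausdorff dimension of `A ⊆ ℤ`. -/
noncomputable def dimBT (r : ℕ) (A : Set ℤ) : ℝ :=
  sInf {α : ℝ | 0 < α ∧ mBT r α A < ⊤}

/-- The set of zeroes of a binary sequence, viewed inside `ℤ` (at the paper's
positions `1, 2, …`). -/
def zeroSetZ (η : ℕ → Bool) : Set ℤ := {i : ℤ | ∃ n : ℕ, i = (n : ℤ) + 1 ∧ η n = false}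

/-! ### The grouping construction -/

/-- A cluster together with its mass. -/
abbrev Clu : Type := Set ℕ × ℕ

/-- The set of (paper, i.e. 1-based) positions of the ones of `ξ`. -/
def Gamma (ξ : ℕ → Bool) : Set ℕ := {n | 1 ≤ n ∧ ξ (n - 1) = true}

/-- The span of a set: the smallest interval containing it. -/
noncomputable def spanI (C : Set ℕ) : Set ℕ := Set.Icc (sInf C) (sSup C)

/-- Euclidean distance between two sets of integers. -/
noncomputable def cluDist (C D : Set ℕ) : ℕ := sInf {d | ∃ a ∈ C, ∃ b ∈ D, d = Nat.dist a b}

/-- Diameter of a set of integers. -/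
noncomputable def sdiam (C : Set ℕ) : ℕ := sSup {d | ∃ a ∈ C, ∃ b ∈ C, d = Nat.dist a b}

/-- `C` lies entirely to the left of `D`. -/
def cluLT (C D : Set ℕ) : Prop := ∀ a ∈ C, ∀ b ∈ D, a < b

/-- `p` and `q` are adjacent clusters of the collection `B` (no cluster of `B` lies
strictly between them) at distance `< t`. -/
def adjStep (B : Set Clu) (t : ℕ) (p q : Clu) : Prop :=
  p ∈ B ∧ q ∈ B ∧ cluDist p.1 q.1 < t ∧
    ((cluLT p.1 q.1 ∧ ∀ r ∈ B, ¬(cluLT p.1 r.1 ∧ cluLT r.1 q.1)) ∨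
      (cluLT q.1 p.1 ∧ ∀ r ∈ B, ¬(cluLT q.1 r.1 ∧ cluLT r.1 p.1)))

/-- The maximal run (within the collection `B`, with gap threshold `t`) containing `p`. -/
def runOf (B : Set Clu) (t : ℕ) (p : Clu) : Set Clu :=
  {q ∈ B | Relation.ReflTransGen (adjStep B t) p q}

/-- `R` is a maximal run of length `≥ 2` of clusters of `B` with gap threshold `t`. -/
def IsRun (B : Set Clu) (t : ℕ) (R : Set Clu) : Prop :=
  ∃ p ∈ B, R = runOf B t p ∧ ∃ q ∈ R, q ≠ p

/-- The level-`(k+1)` cluster created from a maximal `(k+1)`-run `R`: its point set is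
`span(R) ∩ Γ`, and its mass is `∑ m(constituents) - k (n - 1)`. -/
noncomputable def runClu (Γ : Set ℕ) (k : ℕ) (R : Set Clu) : Clu :=
  (spanI (⋃ q ∈ R, q.1) ∩ Γ, (∑ᶠ q ∈ R, q.2) - k * (Nat.card R - 1))

/-- One step of the grouping construction: from the partition `𝐂_k` to `𝐂_{k+1}`. -/
noncomputable def nextPart (Γ : Set ℕ) (M k : ℕ) (S : Set Clu) : Set Clu :=
  {c | ∃ R, IsRun {q ∈ S | k + 1 ≤ q.2} (M ^ (k + 1)) R ∧ c = runClu Γ k R} ∪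
    {c ∈ S | ∀ R, IsRun {q ∈ S | k + 1 ≤ q.2} (M ^ (k + 1)) R →
      Disjoint c.1 (spanI (⋃ q ∈ R, q.1))}

/-- The partition `𝐂_k` of `Γ` into clusters with masses (grouping construction with
spacing parameter `M`). -/
noncomputable def parts (Γ : Set ℕ) (M : ℕ) : ℕ → Set Clu
  | 0 => {c | ∃ x ∈ Γ, c = ({x}, 1)}
  | k + 1 => nextPart Γ M k (parts Γ M k)

/-- `c` is a cluster of level `ℓ`: it appears in `𝐂_ℓ` and in no earlier partition. -/
def IsLevelCluster (Γ : Set ℕ) (M ℓ : ℕ) (c : Clu) : Prop :=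
  c ∈ parts Γ M ℓ ∧ ∀ k < ℓ, c ∉ parts Γ M k

/-- `κ(x) < ∞` : the levels of the clusters containing `x` are bounded. -/
def KappaFinite (Γ : Set ℕ) (M : ℕ) (x : ℕ) : Prop :=
  BddAbove {ℓ | ∃ c : Clu, IsLevelCluster Γ M ℓ c ∧ x ∈ c.1}

/-- The event `Ξ(p)` on which the grouping construction is well set:
`κ(x) < ∞` for every `x ∈ Γ(ξ)`. -/
def GoodSeq (M : ℕ) (ξ : ℕ → Bool) : Prop := ∀ x ∈ Gamma ξ, KappaFinite (Gamma ξ) M x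

/-- The collection `𝐂_∞` of maximal clusters: those that stay in `𝐂_k` forever. -/
def maxClusters (Γ : Set ℕ) (M : ℕ) : Set Clu :=
  {c | ∃ ℓ, ∀ k, ℓ ≤ k → c ∈ parts Γ M k}

/-- The defining condition of `χ(ξ) ≤ k` : every maximal cluster of mass `> k`
is at distance `≥ M^{mass}` from the origin.  (Positions are 1-based, so the distance
from a cluster to `0` is its smallest element.) -/
def ChiCond (Γ : Set ℕ) (M k : ℕ) : Prop :=
  ∀ c ∈ maxClusters Γ M, k < c.2 → M ^ c.2 ≤ sInf c.1

/-- The maximal cluster containing a given point (junk if there is none). -/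
noncomputable def maxCluOf (Γ : Set ℕ) (M : ℕ) (x : ℕ) : Clu :=
  letI := Classical.dec (∃ c : Clu, c ∈ maxClusters Γ M ∧ x ∈ c.1)
  if h : ∃ c : Clu, c ∈ maxClusters Γ M ∧ x ∈ c.1 then h.choose else (∅, 0)

/-- Enumeration of the maximal clusters in increasing order, together with the union
of those already enumerated. -/
noncomputable def enumAux (Γ : Set ℕ) (M : ℕ) : ℕ → Clu × Set ℕ
  | 0 => (maxCluOf Γ M (sInf Γ), (maxCluOf Γ M (sInf Γ)).1)
  | j + 1 =>
    (maxCluOf Γ M (sInf (Γ \ (enumAux Γ M j).2)),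
      (enumAux Γ M j).2 ∪ (maxCluOf Γ M (sInf (Γ \ (enumAux Γ M j).2))).1)

/-- The `j`-th maximal cluster `C_{∞,j}` (`j` is 0-based here). -/
noncomputable def enumClu (Γ : Set ℕ) (M : ℕ) (j : ℕ) : Clu := (enumAux Γ M j).1

/-- The start-point `x̂_j` of the `j`-th maximal cluster (`j` is 0-based here). -/
noncomputable def hatx (Γ : Set ℕ) (M : ℕ) : ℕ → ℕ
  | 0 => sInf Γ
  | j + 1 => sInf (Γ \ (enumAux Γ M j).2)

/-- The (1-based) position `x̂_j - ∑_{t<j} diam(C_{∞,t})` at which the entry of the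
`j`-th maximal cluster sits in the weighted word `ψ^ξ`. -/
noncomputable def cluPos (Γ : Set ℕ) (M : ℕ) (j : ℕ) : ℕ :=
  hatx Γ M j - ∑ t ∈ Finset.range j, sdiam (enumClu Γ M t).1

/-- The weighted word `ψ^ξ` associated to `ξ` by the grouping construction. -/
noncomputable def psiXi (M : ℕ) (ξ : ℕ → Bool) : ℕ → ℕ := fun i =>
  letI := Classical.dec (∃ j : ℕ, i + 1 = cluPos (Gamma ξ) M j)
  if h : ∃ j : ℕ, i + 1 = cluPos (Gamma ξ) M j then (enumClu (Gamma ξ) M h.choose).2 else 0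

/-- `ψ ⪯_M ζ`. -/
def PrecM (M : ℕ) (ψ ζ : ℕ → ℕ) : Prop :=
  ∀ j, (ψ j = 0 ↔ ζ j = 0) ∧ (1 ≤ ψ j → ψ j ≤ ζ j ∧ ζ j ≤ 3 * M ^ (ψ j - 1))

/-- The set `∪_i (span(C_{∞,i}) \ C_{∞,i})` of points to be deleted. -/
def Dset (Γ : Set ℕ) (M : ℕ) : Set ℕ := ⋃ c ∈ maxClusters Γ M, spanI c.1 \ c.1

/-- `j_n(ξ)` : the `n`-th (0-based) element of `Dset`, shifted by `n` to account for
the previous deletions (this is the paper's `j_{n+1}`, a 1-based position). -/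
noncomputable def jseq (Γ : Set ℕ) (M : ℕ) (n : ℕ) : ℕ := Nat.nth (· ∈ Dset Γ M) n - n

/-- The iterates `ξ^{(n)}` obtained by successively deleting the zeroes of `ξ`
lying inside spans of maximal clusters. -/
noncomputable def xiIter (M : ℕ) (ξ : ℕ → Bool) : ℕ → ℕ → Bool
  | 0 => ξ
  | n + 1 => delta0 (xiIter M ξ n) (jseq (Gamma ξ) M n - 1)

/-- The fattened hierarchical weighted word `ζ̃(L)` (with `M = 3(L+1)`). -/
noncomputable def tzeta (L : ℕ) : ℕ → ℕ := fun j =>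
  if zetaL L j = 0 then 0 else 3 * (3 * (L + 1)) ^ (zetaL L j - 1)

/-- `|A ∩ [0, n)|` for `A ⊆ ℕ`. -/
noncomputable def massCount (A : Set ℕ) (n : ℕ) : ℕ := Nat.card {a : ℕ | a ∈ A ∧ a < n}

/-! ### Part 1: existence of the matching -/

lemma level_exists (L : ℕ) (hL : 2 ≤ L) (φ : ℕ → ℕ)
    (h0 : ∀ j, 0 < j → (3 * (L + 1)) ^ φ j ≤ j)
    (hA : ∀ i j, 0 < i → i < j → (3 * (L + 1)) ^ min (φ i) (φ j) ≤ j - i) (W : ℕ) (x : ℝ)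
    (hx0 : 0 < x) (hx1 : x < 1) (hx : x * (3 * (L + 1)) = L) :
    ∀ d k : ℕ, k + d = W + 1 → 1 ≤ k → ∃ h : ℕ → ℝ, h 0 = 0 ∧
      (∀ a b : ℕ, |h a - h b| ≤ x ^ k / (1 - x) * |(a : ℝ) - b|) ∧
      ∀ i, k ≤ φ i → φ i ≤ W → 0 < i → ∃ z : ℤ, h i + (i : ℝ) / 2 = z * (L : ℝ) ^ φ i := by
  intro d
  induction d with
  | zero =>
    intro k hk _
    refine ⟨fun _ => 0, rfl, ?_, ?_⟩
    · intro a b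
      have : 0 < 1 - x := by linarith
      simp only [sub_self, abs_zero]
      positivity
    · intro i h1 h2
      omega
  | succ d ih =>
    intro k hk hk1
    obtain ⟨h, hh0, hlip, hmul⟩ := ih (k + 1) (by omega) (by omega)
    have h1x : 0 < 1 - x := by linarith
    have hLk : (0 : ℝ) < (L : ℝ) ^ k := by positivity
    let S : Set ℕ := {i | i = 0 ∨ k ≤ φ i}
    classical
    let f : ℕ → ℝ := fun i => if 0 < i ∧ φ i = k then
      (L : ℝ) ^ k * ⌊(h i + (i : ℝ) / 2) / (L : ℝ) ^ k⌋ - (i : ℝ) / 2 else h i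
    have hf : ∀ i, f i ≤ h i ∧ h i ≤ f i + (L : ℝ) ^ k := by
      intro i
      simp only [f]
      split_ifs with hc
      · have e1 := Int.floor_le ((h i + (i : ℝ) / 2) / (L : ℝ) ^ k)
        have e2 := (Int.lt_floor_add_one ((h i + (i : ℝ) / 2) / (L : ℝ) ^ k)).le
        rw [le_div_iff₀ hLk] at e1
        rw [div_le_iff₀ hLk] at e2
        constructor <;> nlinarith
      · constructor <;> linarith
    have hdist : ∀ a b, a ∈ S → b ∈ S → a < b → (3 * (L + 1)) ^ k ≤ b - a := by
      intro a b ha hb hab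
      have hM : 0 < 3 * (L + 1) := by omega
      rcases hb with hb | hb
      · omega
      rcases ha with ha | ha
      · subst ha
        exact (Nat.pow_le_pow_right hM hb).trans (h0 b hab)
      · rcases Nat.eq_zero_or_pos a with h00 | h00
        · subst h00
          exact (Nat.pow_le_pow_right hM hb).trans (h0 b hab)
        · exact (Nat.pow_le_pow_right hM (le_min ha hb)).trans (hA a b h00 hab)
    have heps : x ^ (k + 1) / (1 - x) + x ^ k = x ^ k / (1 - x) := by
      field_simp
      ring
    have hlt : ∀ a b, a ∈ S → b ∈ S → a < b →
        |f a - f b| ≤ x ^ k / (1 - x) * |(a : ℝ) - b| := by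
      intro a b ha hb hab
      have hd := hdist a b ha hb hab
      have hd' : ((3 * ((L : ℝ) + 1)) ^ k) ≤ b - a := by
        have : (((3 * (L + 1)) ^ k : ℕ) : ℝ) ≤ ((b - a : ℕ) : ℝ) := by exact_mod_cast hd
        rw [Nat.cast_sub hab.le] at this
        push_cast at this
        exact this
      have hLx : (L : ℝ) ^ k ≤ x ^ k * |(a : ℝ) - b| := by
        have hab' : (a : ℝ) < b := by exact_mod_cast hab
        rw [abs_sub_comm, abs_of_pos (by linarith)]
        calc (L : ℝ) ^ k = x ^ k * (3 * ((L : ℝ) + 1)) ^ k := by rw [← mul_pow, hx]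
          _ ≤ _ := by gcongr
      have h3 := hlip a b
      have ea := hf a
      have eb := hf b
      rw [← heps, add_mul]
      rw [abs_le] at h3 ⊢
      constructor <;> linarith [h3.1, h3.2, ea.1, ea.2, eb.1, eb.2]
    have hK : 0 ≤ x ^ k / (1 - x) := by positivity
    have hLipOn : LipschitzOnWith (Real.toNNReal (x ^ k / (1 - x))) f S := by
      apply LipschitzOnWith.of_dist_le_mul
      intro a ha b hb
      rw [Real.coe_toNNReal _ hK, Real.dist_eq, Nat.dist_eq]
      rcases lt_trichotomy a b with hab | hab | hab
      · exact hlt a b ha hb hab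
      · subst hab; simp
      · rw [abs_sub_comm (f a), abs_sub_comm (a : ℝ)]
        exact hlt b a hb ha hab
    obtain ⟨F, hF, hFe⟩ := hLipOn.extend_real
    refine ⟨F, ?_, ?_, ?_⟩
    · rw [← hFe (show (0 : ℕ) ∈ S from Or.inl rfl)]
      simp [f, hh0]
    · intro a b
      have := hF.dist_le_mul a b
      rwa [Real.coe_toNNReal _ hK, Real.dist_eq, Nat.dist_eq] at this
    · intro i hi1 hi2 hi0
      rw [← hFe (show i ∈ S from Or.inr hi1)]
      by_cases hik : φ i = k
      · refine ⟨⌊(h i + (i : ℝ) / 2) / (L : ℝ) ^ k⌋, ?_⟩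
        simp only [f, hik, hi0, and_self, if_true]
        ring
      · obtain ⟨z, hz⟩ := hmul i (by omega) hi2 hi0
        refine ⟨z, ?_⟩
        simp only [f, hik, and_false, if_false]
        exact hz

lemma trunc_exists (L : ℕ) (hL : 2 ≤ L) (φ : ℕ → ℕ)
    (h0 : ∀ j, 0 < j → (3 * (L + 1)) ^ φ j ≤ j)
    (hA : ∀ i j, 0 < i → i < j → (3 * (L + 1)) ^ min (φ i) (φ j) ≤ j - i) (W : ℕ) :
    ∃ G : ℕ → ℕ, G 0 = 0 ∧ (∀ i, G i ≤ i) ∧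
      (∀ i, 1 ≤ φ i → φ i ≤ W → 0 < i → L ^ φ i ∣ G i) ∧
      ∀ i j, i < j → (i = 0 ∨ (1 ≤ φ i ∧ φ i ≤ W)) → (1 ≤ φ j ∧ φ j ≤ W) →
        G i < G j ∧ G j + i ≤ j + G i := by
  have hLr : (2 : ℝ) ≤ L := by exact_mod_cast hL
  obtain ⟨h, hh0, hlip, hmul⟩ := level_exists L hL φ h0 hA W ((L : ℝ) / (3 * (L + 1)))
    (by positivity) (by rw [div_lt_one (by positivity)]; linarith) (by field_simp) W 1
    (by omega) le_rfl
  have hc : ((L : ℝ) / (3 * (L + 1))) ^ 1 / (1 - (L : ℝ) / (3 * (L + 1))) < 1 / 2 := by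
    have : (1 - (L : ℝ) / (3 * (L + 1))) = (2 * L + 3) / (3 * (L + 1)) := by
      field_simp; ring
    rw [this, pow_one, div_div_div_cancel_right₀ (by positivity), div_lt_div_iff₀ (by positivity)
      (by positivity)]
    linarith
  set c := ((L : ℝ) / (3 * (L + 1))) ^ 1 / (1 - (L : ℝ) / (3 * (L + 1)))
  have key : ∀ a b : ℕ, a < b → h a + (a : ℝ) / 2 < h b + (b : ℝ) / 2 ∧
      h b + (b : ℝ) / 2 - (h a + (a : ℝ) / 2) ≤ (b : ℝ) - a := by
    intro a b hab
    have hab' : (a : ℝ) < b := by exact_mod_cast hab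
    have := hlip a b
    rw [abs_sub_comm (a : ℝ), abs_of_pos (show (0 : ℝ) < (b : ℝ) - a by linarith), abs_le] at this
    have h4 : c * ((b : ℝ) - a) < 1 / 2 * ((b : ℝ) - a) :=
      mul_lt_mul_of_pos_right hc (by linarith)
    constructor <;> linarith [this.1, this.2]
  have hnn : ∀ i : ℕ, 0 ≤ h i + (i : ℝ) / 2 ∧ h i + (i : ℝ) / 2 ≤ i := by
    intro i
    rcases Nat.eq_zero_or_pos i with hi | hi
    · subst hi; simp [hh0]
    · have := key 0 i hi
      simp only [hh0, Nat.cast_zero] at this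
      constructor <;> linarith [this.1, this.2]
  have hfl : ∀ i, (i = 0 ∨ (1 ≤ φ i ∧ φ i ≤ W)) →
      ((⌊h i + (i : ℝ) / 2⌋₊ : ℕ) : ℝ) = h i + (i : ℝ) / 2 ∧
      (0 < i → L ^ φ i ∣ ⌊h i + (i : ℝ) / 2⌋₊) := by
    intro i hi
    rcases Nat.eq_zero_or_pos i with hi0 | hi0
    · subst hi0; simp [hh0]
    · obtain ⟨h1, h2⟩ := hi.resolve_left (by omega)
      obtain ⟨z, hz⟩ := hmul i h1 h2 hi0
      have hzn : 0 ≤ z := by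
        have h3 := (hnn i).1
        rw [hz] at h3
        have : (0 : ℝ) < (L : ℝ) ^ φ i := by positivity
        have h5 : (0 : ℝ) ≤ z := nonneg_of_mul_nonneg_left h3 this
        exact_mod_cast h5
      lift z to ℕ using hzn
      have : h i + (i : ℝ) / 2 = ((z * L ^ φ i : ℕ) : ℝ) := by
        rw [hz]; push_cast; ring
      rw [this, Nat.floor_natCast]
      exact ⟨rfl, fun _ => Dvd.intro_left _ rfl⟩
  refine ⟨fun i => ⌊h i + (i : ℝ) / 2⌋₊, by simp [hh0], ?_, ?_, ?_⟩
  · intro i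
    exact Nat.floor_le_of_le (hnn i).2
  · intro i h1 h2 hi
    exact (hfl i (Or.inr ⟨h1, h2⟩)).2 hi
  · intro i j hij hi hj
    have e1 := (hfl i hi).1
    have e2 := (hfl j (Or.inr hj)).1
    have := key i j hij
    rw [← e1, ← e2] at this
    obtain ⟨k1, k2⟩ := this
    refine ⟨by exact_mod_cast k1, ?_⟩
    have : ((⌊h j + (j : ℝ) / 2⌋₊ : ℕ) : ℝ) + i ≤ j + ((⌊h i + (i : ℝ) / 2⌋₊ : ℕ) : ℝ) := by
      linarith
    exact_mod_cast this

lemma full_exists (L : ℕ) (hL : 2 ≤ L) (φ : ℕ → ℕ)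
    (h0 : ∀ j, 0 < j → (3 * (L + 1)) ^ φ j ≤ j)
    (hA : ∀ i j, 0 < i → i < j → (3 * (L + 1)) ^ min (φ i) (φ j) ≤ j - i) :
    ∃ G : ℕ → ℕ, G 0 = 0 ∧ (∀ i, G i ≤ i) ∧
      (∀ i, 1 ≤ φ i → 0 < i → L ^ φ i ∣ G i) ∧
      ∀ i j, i < j → (i = 0 ∨ 1 ≤ φ i) → 1 ≤ φ j →
        G i < G j ∧ G j + i ≤ j + G i := by
  choose G hG0 hGle hGd hGm using trunc_exists L hL φ h0 hA
  have hlim : ∀ i, ∃ v, ∀ᶠ W in (hyperfilter ℕ : Filter ℕ), G W i = v := by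
    intro i
    have : ∀ᶠ W in (hyperfilter ℕ : Filter ℕ), ∃ v ∈ Set.Iic i, G W i = v :=
      Eventually.of_forall fun W => ⟨_, hGle W i, rfl⟩
    rw [Ultrafilter.eventually_exists_mem_iff (Set.finite_Iic i)] at this
    obtain ⟨v, _, hv⟩ := this
    exact ⟨v, hv⟩
  choose g hg using hlim
  have hlarge : ∀ n, ∀ᶠ W in (hyperfilter ℕ : Filter ℕ), n ≤ W := by
    intro n
    have : (hyperfilter ℕ : Filter ℕ) ≤ atTop := Nat.hyperfilter_le_atTop
    exact this (eventually_ge_atTop n)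
  refine ⟨g, ?_, ?_, ?_, ?_⟩
  · obtain ⟨W, hW⟩ := (hg 0).exists
    rw [← hW, hG0]
  · intro i
    obtain ⟨W, hW⟩ := (hg i).exists
    rw [← hW]; exact hGle W i
  · intro i h1 hi
    obtain ⟨W, hW, hW2⟩ := ((hg i).and (hlarge (φ i))).exists
    rw [← hW]; exact hGd W i h1 hW2 hi
  · intro i j hij hi hj
    obtain ⟨W, ⟨hW, hW'⟩, hW2, hW3⟩ :=
      (((hg i).and (hg j)).and ((hlarge (φ i)).and (hlarge (φ j)))).exists
    rw [← hW, ← hW']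
    exact hGm W i j hij (hi.imp id fun h => ⟨h, hW2⟩) ⟨hj, hW3⟩

/-! ### Part 2: from a matching to compatibility -/

lemma psi_pdelta1 {a : ℕ → ℕ} (ha : Psi a) (i : ℕ) : Psi (pdelta1 a i) := by
  unfold pdelta1
  split_ifs with h1 h2
  · exact ha
  · intro j hj
    have e1 := ha j
    have e2 := ha (j + 1)
    simp only [deleteAt] at hj ⊢
    by_cases c1 : j < i
    · rw [if_pos c1] at hj
      by_cases c2 : j + 1 < i
      · rw [if_pos c2]; exact e1 hj
      · have : j + 1 = i := by omega
        subst this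
        have := e1 hj
        omega
    · rw [if_neg c1] at hj
      rw [if_neg (by omega)]
      exact e2 hj
  · intro j hj
    have e1 := ha j
    simp only [Function.update_apply] at hj ⊢
    split_ifs at hj ⊢ with h3 h4 h5
    · omega
    · subst h3
      have := e1 hj
      omega
    · subst h5
      exact e1 (by omega)
    · exact e1 hj

lemma psi_pdelta0 {a : ℕ → ℕ} (ha : Psi a) (i : ℕ) : Psi (pdelta0 a i) := by
  unfold pdelta0
  split_ifs with h1 h2
  · exact ha
  · intro j hj
    have e1 := ha j
    have e2 := ha (j + 1)
    simp only [deleteAt] at hj ⊢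
    by_cases c1 : j < i
    · rw [if_pos c1] at hj
      by_cases c2 : j + 1 < i
      · rw [if_pos c2]; exact e1 hj
      · have : j + 1 = i := by omega
        subst this
        simp only [Nat.add_sub_cancel] at h2
        rw [if_neg (by omega)]
        omega
    · rw [if_neg c1] at hj
      rw [if_neg (by omega)]
      exact e2 hj
  · push Not at h2
    obtain ⟨h2, h3, h4⟩ := h2
    obtain ⟨m, rfl⟩ : ∃ m, i = m + 1 := ⟨i - 1, by omega⟩
    simp only [Nat.add_sub_cancel] at h3
    intro j hj
    have e1 := ha j
    have e2 := ha (j + 2)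
    simp only [Nat.add_sub_cancel] at hj ⊢
    by_cases c1 : j + 1 < m + 1
    · rw [if_pos c1] at hj
      have := e1 hj
      by_cases c2 : j + 1 + 1 < m + 1
      · rw [if_pos c2]; exact this
      · have : j + 1 = m := by omega
        subst this
        omega
    · rw [if_neg c1] at hj
      rw [if_neg (by omega), if_neg (by omega)]
      by_cases c2 : j + 1 = m + 1
      · have : j = m := by omega
        subst this
        exact e2 (Nat.one_le_iff_ne_zero.2 h4)
      · rw [if_neg c2] at hj
        exact e2 hj

lemma psi_reach1 {a b : ℕ → ℕ} (ha : Psi a) (h : PReach1 a b) : Psi b := by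
  induction h with
  | refl => exact ha
  | tail _ h ih => obtain ⟨i, rfl⟩ := h; exact psi_pdelta1 ih i

lemma psi_reach0 {a b : ℕ → ℕ} (ha : Psi a) (h : PReach0 a b) : Psi b := by
  induction h with
  | refl => exact ha
  | tail _ h ih => obtain ⟨i, rfl⟩ := h; exact psi_pdelta0 ih i

/-- Decreasing the weight of a letter to a smaller positive weight. -/
lemma reach1_decr (u : ℕ → ℕ) (n w : ℕ) (hw : 1 ≤ w) : ∀ d, u n = w + d →
    PReach1 u (Function.update u n w) := by
  intro d
  induction d generalizing u with
  | zero =>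
    intro h
    have : Function.update u n w = u := by
      rw [show w = u n by omega, Function.update_eq_self]
    rw [this]
    exact Relation.ReflTransGen.refl
  | succ d ih =>
    intro h
    have h1 : pdelta1 u n = Function.update u n (w + d) := by
      unfold pdelta1
      rw [if_neg (by omega), if_neg (by omega), show u n - 1 = w + d by omega]
    have h2 := ih (Function.update u n (w + d)) (by simp)
    rw [Function.update_idem] at h2
    exact Relation.ReflTransGen.head ⟨n, h1.symm⟩ h2

/-- Deleting the letter at `n` of weight `w ≥ 1`. -/
lemma reach1_delete (u : ℕ → ℕ) (n : ℕ) (h : 1 ≤ u n) : PReach1 u (deleteAt u n) := by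
  have h1 := reach1_decr u n 1 le_rfl (u n - 1) (by omega)
  refine Relation.ReflTransGen.tail h1 ⟨n, ?_⟩
  unfold pdelta1
  rw [if_neg (by simp), if_pos (by simp)]
  funext j
  simp only [deleteAt, Function.update_apply]
  split_ifs <;> omega

lemma reach0_delete (u : ℕ → ℕ) (n : ℕ) (h : u n = 0) (h' : n = 0 ∨ u (n - 1) = 0) :
    PReach0 u (deleteAt u n) := by
  refine Relation.ReflTransGen.single ⟨n, ?_⟩
  unfold pdelta0
  rw [if_neg (by simpa using h), if_pos (by tauto)]

/-- State of the matching algorithm after `n` letters have been fixed. -/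
structure MState (ζ ψ g : ℕ → ℕ) (n p q : ℕ) (u v : ℕ → ℕ) : Prop where
  ru : PReach1 ζ u
  rv : PReach0 ψ v
  agree : ∀ m < n, u m = v m
  tu : ∀ m, u (n + m) = ζ (p + m)
  tv : ∀ m, v (n + m) = ψ (q + m)
  sep : n = 0 ∨ v (n - 1) = 0 ∨ ζ p = 0
  inv : ∀ i, q ≤ i → 1 ≤ ψ i → p ≤ g i ∧ g i + q ≤ i + p

section
variable {ζ ψ g : ℕ → ℕ}

lemma step_A (hζ : Psi ζ) (hg : ∀ i, 1 ≤ ψ i → ψ i ≤ ζ (g i))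
    (hm : ∀ i j, i < j → 1 ≤ ψ i → 1 ≤ ψ j → g i < g j ∧ g j + i ≤ j + g i)
    {n p q : ℕ} {u v : ℕ → ℕ} (S : MState ζ ψ g n p q u v) (hq : 1 ≤ ψ q) :
    ∃ u', MState ζ ψ g (n + 1) (p + 1) (q + 1) u' v ∧ ∀ m < n, u' m = u m := by
  have hi := S.inv q le_rfl hq
  have hp : g q = p := by omega
  have hle := hg q hq
  rw [hp] at hle
  have hun : u n = ζ p := S.tu 0
  have hvn : v n = ψ q := S.tv 0
  refine ⟨Function.update u n (ψ q), ⟨?_, S.rv, ?_, ?_, ?_, ?_, ?_⟩, ?_⟩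
  · exact Relation.ReflTransGen.trans S.ru
      (reach1_decr u n (ψ q) hq (ζ p - ψ q) (by omega))
  · intro m hm
    rw [Function.update_apply]
    split_ifs with h
    · rw [h, hvn]
    · exact S.agree m (by omega)
  · intro m
    rw [Function.update_apply, if_neg (by omega), add_assoc, S.tu, add_assoc]
  · intro m
    rw [add_assoc, S.tv, add_assoc]
  · right; right
    exact hζ p (by omega)
  · intro i hi1 hi2
    have := hm q i (by omega) hq hi2
    omega
  · intro m hm
    rw [Function.update_apply, if_neg (by omega)]

lemma step_B (hg : ∀ i, 1 ≤ ψ i → ψ i ≤ ζ (g i))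
    {n p q : ℕ} {u v : ℕ → ℕ} (S : MState ζ ψ g n p q u v) (hq : ψ q = 0) (hp : ζ p = 0) :
    MState ζ ψ g (n + 1) (p + 1) (q + 1) u v := by
  have hun : u n = ζ p := S.tu 0
  have hvn : v n = ψ q := S.tv 0
  refine ⟨S.ru, S.rv, ?_, ?_, ?_, ?_, ?_⟩
  · intro m hm
    rcases Nat.lt_succ_iff_lt_or_eq.1 hm with h | h
    · exact S.agree m h
    · rw [h]; omega
  · intro m
    rw [add_assoc, S.tu, add_assoc]
  · intro m
    rw [add_assoc, S.tv, add_assoc]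
  · right; left
    simp only [Nat.add_sub_cancel]; omega
  · intro i hi1 hi2
    have h1 := S.inv i (by omega) hi2
    have h2 := hg i hi2
    have : p ≠ g i := by rintro h; rw [← h] at h2; omega
    omega

lemma step_C {n p q : ℕ} {u v : ℕ → ℕ} (S : MState ζ ψ g n p q u v) (hq : ψ q = 0)
    (hp : 1 ≤ ζ p) (hm : ∀ i, q ≤ i → 1 ≤ ψ i → g i + (q + 1) ≤ i + p) :
    ∃ v', MState ζ ψ g n p (q + 1) u v' := by
  have hvn : v n = ψ q := S.tv 0
  have hs := S.sep
  refine ⟨deleteAt v n, S.ru, ?_, ?_, S.tu, ?_, ?_, ?_⟩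
  · exact Relation.ReflTransGen.trans S.rv (reach0_delete v n (by omega) (by omega))
  · intro m hm
    simp only [deleteAt, if_pos hm]
    exact S.agree m hm
  · intro m
    simp only [deleteAt]
    rw [if_neg (by omega), add_assoc, S.tv, add_assoc, add_comm 1 m]
  · rcases Nat.eq_zero_or_pos n with h | h
    · exact Or.inl h
    · right
      simp only [deleteAt]
      rw [if_pos (by omega)]
      omega
  · intro i hi1 hi2
    exact ⟨(S.inv i (by omega) hi2).1, hm i (by omega) hi2⟩

lemma step_D (hζ : Psi ζ) {n p q : ℕ} {u v : ℕ → ℕ} (S : MState ζ ψ g n p q u v)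
    (hp : 1 ≤ ζ p) (hm : ∀ i, q ≤ i → 1 ≤ ψ i → g i ≠ p) :
    ∃ u', MState ζ ψ g n (p + 1) q u' v ∧ ∀ m < n, u' m = u m := by
  have hun : u n = ζ p := S.tu 0
  refine ⟨deleteAt u n, ⟨?_, S.rv, ?_, ?_, S.tv, ?_, ?_⟩, ?_⟩
  · exact Relation.ReflTransGen.trans S.ru (reach1_delete u n (by omega))
  · intro m hm
    simp only [deleteAt, if_pos hm]
    exact S.agree m hm
  · intro m
    simp only [deleteAt]
    rw [if_neg (by omega), add_assoc, S.tu, add_assoc, add_comm 1 m]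
  · exact Or.inr (Or.inr (hζ p hp))
  · intro i hi1 hi2
    have := S.inv i hi1 hi2
    have := hm i hi1 hi2
    omega
  · intro m hm
    simp only [deleteAt, if_pos hm]

lemma step_C_iter (hζ : Psi ζ) (hg : ∀ i, 1 ≤ ψ i → ψ i ≤ ζ (g i))
    (hm : ∀ i j, i < j → 1 ≤ ψ i → 1 ≤ ψ j → g i < g j ∧ g j + i ≤ j + g i)
    {n p i : ℕ} (hi : 1 ≤ ψ i) (hgi : g i = p) :
    ∀ d q u v, q + d = i → MState ζ ψ g n p q u v →
    ∃ p' q' u' v', MState ζ ψ g (n + 1) p' q' u' v' ∧ ∀ m < n, u' m = u m := by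
  intro d
  induction d with
  | zero =>
    intro q u v hq S
    obtain ⟨u', h⟩ := step_A hζ hg hm S (by rw [show q = i by omega]; exact hi)
    exact ⟨_, _, u', v, h⟩
  | succ d ih =>
    intro q u v hq S
    have hq0 : ψ q = 0 := by
      by_contra hne
      have h1 := hm q i (by omega) (by omega) hi
      have h2 := S.inv q le_rfl (by omega)
      omega
    have hgz := hg i hi
    rw [hgi] at hgz
    obtain ⟨v', S'⟩ := step_C S hq0 (by omega) (by
      intro j hj1 hj2
      rcases lt_trichotomy j i with h | h | h
      · have h1 := hm j i h hj2 hi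
        have h2 := S.inv j hj1 hj2
        omega
      · subst h; omega
      · have h1 := hm i j h hi hj2
        omega)
    exact ih (q + 1) u v' (by omega) S'

lemma step_main (hζ : Psi ζ) (hg : ∀ i, 1 ≤ ψ i → ψ i ≤ ζ (g i))
    (hm : ∀ i j, i < j → 1 ≤ ψ i → 1 ≤ ψ j → g i < g j ∧ g j + i ≤ j + g i)
    {n p q : ℕ} {u v : ℕ → ℕ} (S : MState ζ ψ g n p q u v) :
    ∃ p' q' u' v', MState ζ ψ g (n + 1) p' q' u' v' ∧ ∀ m < n, u' m = u m := by
  by_cases hq : ψ q = 0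
  swap
  · obtain ⟨u', h⟩ := step_A hζ hg hm S (by omega)
    exact ⟨_, _, u', v, h⟩
  by_cases hp : ζ p = 0
  · exact ⟨_, _, u, v, step_B hg S hq hp, fun _ _ => rfl⟩
  by_cases hex : ∃ i, q ≤ i ∧ 1 ≤ ψ i ∧ g i = p
  · obtain ⟨i, hi1, hi2, hi3⟩ := hex
    exact step_C_iter hζ hg hm hi2 hi3 (i - q) q u v (by omega) S
  · push Not at hex
    obtain ⟨u', S', hu'⟩ := step_D hζ S (by omega) hex
    exact ⟨_, _, u', v, step_B hg S' hq (hζ p (by omega)), hu'⟩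

theorem compatible_of_matching (hζ : Psi ζ) (hψ : Psi ψ)
    (hg : ∀ i, 1 ≤ ψ i → ψ i ≤ ζ (g i)) (hle : ∀ i, 1 ≤ ψ i → g i ≤ i)
    (hm : ∀ i j, i < j → 1 ≤ ψ i → 1 ≤ ψ j → g i < g j ∧ g j + i ≤ j + g i) :
    CompatibleP ζ ψ := by
  let T : ℕ → Type := fun n =>
    {s : ℕ × ℕ × (ℕ → ℕ) × (ℕ → ℕ) // MState ζ ψ g n s.1 s.2.1 s.2.2.1 s.2.2.2}
  have hstep : ∀ n (s : T n), ∃ s' : T (n + 1), ∀ m < n, s'.1.2.2.1 m = s.1.2.2.1 m := by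
    intro n s
    obtain ⟨p', q', u', v', h1, h2⟩ := step_main hζ hg hm s.2
    exact ⟨⟨(p', q', u', v'), h1⟩, h2⟩
  choose nxt hnxt using hstep
  let s0 : T 0 := ⟨(0, 0, ζ, ψ), ⟨Relation.ReflTransGen.refl, Relation.ReflTransGen.refl,
    by intro m hm; omega, by intro m; rfl, by intro m; rfl, Or.inl rfl,
    by intro i _ h; have := hle i h; exact ⟨Nat.zero_le _, by omega⟩⟩⟩
  let s : ∀ n, T n := fun n => Nat.rec s0 (fun n t => nxt n t) n
  have hs : ∀ n, ∀ m < n, (s (n + 1)).1.2.2.1 m = (s n).1.2.2.1 m := fun n => hnxt n (s n)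
  have hu : ∀ m k, m + 1 ≤ k → (s k).1.2.2.1 m = (s (m + 1)).1.2.2.1 m := by
    intro m k hk
    induction k, hk using Nat.le_induction with
    | base => rfl
    | succ k hk ih => rw [hs k m (by omega), ih]
  refine ⟨fun k => (s k).1.2.2.1, fun k => (s k).1.2.2.2, fun m => (s (m + 1)).1.2.2.1 m,
    fun k => (s k).2.ru, fun k => (s k).2.rv, fun k => psi_reach1 hζ (s k).2.ru,
    fun k => psi_reach0 hψ (s k).2.rv, ?_, ?_⟩
  · rw [tendsto_pi_nhds]
    intro m
    apply tendsto_const_nhds.congr'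
    filter_upwards [eventually_ge_atTop (m + 1)] with k hk
    exact (hu m k hk).symm
  · rw [tendsto_pi_nhds]
    intro m
    apply tendsto_const_nhds.congr'
    filter_upwards [eventually_ge_atTop (m + 1)] with k hk
    rw [← hu m k hk]
    exact (s k).2.agree m (by omega)

end

/-! ### Part 3: the hierarchical word -/

lemma zetaL_bdd (L : ℕ) (hL : 2 ≤ L) (j : ℕ) : BddAbove {k | L ^ k ∣ j + 1} := by
  refine ⟨j + 1, fun k hk => ?_⟩
  have h1 := Nat.le_of_dvd (Nat.succ_pos j) hk
  have h2 : k < L ^ k := Nat.lt_pow_self (by omega)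
  omega

lemma le_zetaL (L : ℕ) (hL : 2 ≤ L) (j k : ℕ) (h : L ^ k ∣ j + 1) : k ≤ zetaL L j :=
  le_csSup (zetaL_bdd L hL j) h

lemma psi_zetaL (L : ℕ) (hL : 2 ≤ L) : Psi (zetaL L) := by
  have hd : ∀ j, 1 ≤ zetaL L j → L ∣ j + 1 := by
    intro j hj
    have h1 : zetaL L j ∈ {k | L ^ k ∣ j + 1} :=
      Nat.sSup_mem ⟨0, by simp⟩ (zetaL_bdd L hL j)
    exact (dvd_pow_self L (by omega)).trans h1
  intro i hi
  by_contra hne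
  have h1 := hd i hi
  have h2 := hd (i + 1) (by omega)
  have h3 := (Nat.dvd_add_right h1).1 h2
  have := Nat.le_of_dvd one_pos h3
  omega

theorem statement_11 (L : ℕ) (hL : 2 ≤ L) (ψ : ℕ → ℕ) (hψ : Spaced (3 * (L + 1)) ψ) :
    CompatibleP (zetaL L) ψ := by
  obtain ⟨hP, hA, hB⟩ := hψ
  obtain ⟨G, hG0, hGle, hGd, hGm⟩ := full_exists L hL (fun i => ψ (i - 1))
    (by
      intro j hj
      rcases Nat.eq_zero_or_pos (ψ (j - 1)) with h | h
      · simp only [h, pow_zero]; omega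
      · have hmem : j - 1 ∈ idxSet ψ (ψ (j - 1)) := le_refl (ψ (j - 1))
        refine (hB _ h ⟨_, hmem⟩).trans ?_
        have := Nat.sInf_le hmem
        unfold idx
        omega)
    (by
      intro i j hi hij
      have := hA (i - 1) (j - 1) (by omega)
      rwa [show j - 1 - (i - 1) = j - i by omega] at this)
  have hpos : ∀ i, 1 ≤ ψ i → 0 < G (i + 1) := by
    intro i hi
    have := hGm 0 (i + 1) (by omega) (Or.inl rfl) hi
    omega
  refine compatible_of_matching (g := fun i => G (i + 1) - 1) (psi_zetaL L hL) hP ?_ ?_ ?_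
  · intro i hi
    apply le_zetaL L hL
    have h1 := hpos i hi
    rw [show G (i + 1) - 1 + 1 = G (i + 1) by omega]
    exact hGd (i + 1) hi (by omega)
  · intro i hi
    have := hGle (i + 1)
    show G (i + 1) - 1 ≤ i
    omega
  · intro i j hij hi hj
    have h1 := hpos i hi
    have h2 := hpos j hj
    have := hGm (i + 1) (j + 1) (by omega) (Or.inr hi) hj
    show G (i + 1) - 1 < G (j + 1) - 1 ∧ G (j + 1) - 1 + i ≤ j + (G (i + 1) - 1)
    omega

end Paper
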